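/- With α = ln(1+√2), the improper integral ∫_{α/2}^∞ ln(tanh z) dz equals (1/4)·ln²(1+√2) − π²/16. -/

import Mathlib

/-!
The curve `tanh y = exp (-2 * x)`, that is `sinh (2 * x) * sinh (2 * y) = 1`, is symmetric in `x`
and `y`, so `x ↦ artanh (exp (-2 * x)) = -log (tanh x) / 2` is a decreasing involution of `(0, ∞)`.
The area below it is `π² / 16`, by expanding `artanh` and integrating term by term. Cut this region
along the sides of the rectangle with opposite corners at the origin and at a point `(a, b)` of the
curve: reflection in the diagonal turns the piece above the rectangle into the tail of the integral
from `b` on. At the fixed point `a = b = log (1 + √2) / 2` the two tails coincide, and the area of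
the square is `a ^ 2`.
-/

open MeasureTheory Real Set

theorem hasSum_one_div_odd_sq :
    HasSum (fun n : ℕ => 1 / (2 * (n : ℝ) + 1) ^ 2) (π ^ 2 / 8) := by
  have h_even : HasSum (fun n : ℕ => 1 / ((2 * n : ℕ) : ℝ) ^ 2) (1 / 4 * (π ^ 2 / 6)) :=
    (hasSum_zeta_two.mul_left (1 / 4)).congr_fun fun n => by
      push_cast
      rw [mul_pow, one_div_mul_one_div]
      norm_num
  obtain ⟨s, h_odd⟩ : Summable (fun n : ℕ => 1 / ((2 * n + 1 : ℕ) : ℝ) ^ 2) :=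
    hasSum_zeta_two.summable.comp_injective fun m n (h : 2 * m + 1 = 2 * n + 1) => by lia
  have h_total := (h_even.even_add_odd (f := fun n : ℕ => 1 / (n : ℝ) ^ 2) h_odd).unique
    hasSum_zeta_two
  obtain rfl : s = π ^ 2 / 8 := by linarith
  exact_mod_cast h_odd

theorem hasSum_artanh {x : ℝ} (hx : |x| < 1) :
    HasSum (fun n : ℕ => x ^ (2 * n + 1) / (2 * n + 1)) (artanh x) := by
  obtain ⟨h_neg, h_pos⟩ := abs_lt.mp hx
  have h_log : artanh x = (log (1 + x) - log (1 - x)) / 2 := by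
    rw [artanh_eq_half_log ⟨h_neg.le, h_pos.le⟩, log_div (by linarith) (by linarith)]
    ring
  rw [h_log]
  exact ((hasSum_log_sub_log_of_abs_lt_one hx).div_const 2).congr_fun fun n => by ring

theorem exp_neg_two_mul_mem_Ioo {x : ℝ} (hx : 0 < x) : exp (-2 * x) ∈ Ioo (-1) 1 :=
  ⟨by linarith [exp_pos (-2 * x)], exp_lt_one_iff.mpr (by linarith)⟩

theorem tanh_eq_one_sub_exp_div_one_add_exp (x : ℝ) :
    tanh x = (1 - exp (-2 * x)) / (1 + exp (-2 * x)) := by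
  have h : exp (-2 * x) = exp (-x) / exp x := by rw [← exp_sub]; ring_nf
  rw [tanh_eq, h]
  field_simp

theorem log_tanh_eq_neg_two_mul_artanh {x : ℝ} (hx : 0 < x) :
    log (tanh x) = -2 * artanh (exp (-2 * x)) := by
  rw [artanh_eq_half_log (Ioo_subset_Icc_self (exp_neg_two_mul_mem_Ioo hx)),
    tanh_eq_one_sub_exp_div_one_add_exp, ← inv_div, log_inv]
  ring

theorem tanh_le_exp_neg_two_mul_comm {x y : ℝ} :
    tanh y ≤ exp (-2 * x) ↔ tanh x ≤ exp (-2 * y) := by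
  rw [tanh_eq_one_sub_exp_div_one_add_exp, tanh_eq_one_sub_exp_div_one_add_exp,
    div_le_iff₀ (by positivity), div_le_iff₀ (by positivity)]
  constructor <;> intro h <;> linarith

theorem le_artanh_iff_tanh_le {x y : ℝ} (hx : x ∈ Ioo (-1) 1) : y ≤ artanh x ↔ tanh y ≤ x := by
  rw [← artanh_le_artanh_iff ⟨neg_one_lt_tanh y, tanh_lt_one y⟩ hx, artanh_tanh]

theorem le_artanh_exp_neg_two_mul_comm {x y : ℝ} (hx : 0 < x) (hy : 0 < y) :
    y ≤ artanh (exp (-2 * x)) ↔ x ≤ artanh (exp (-2 * y)) := by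
  rw [le_artanh_iff_tanh_le (exp_neg_two_mul_mem_Ioo hx), tanh_le_exp_neg_two_mul_comm,
    le_artanh_iff_tanh_le (exp_neg_two_mul_mem_Ioo hy)]

theorem artanh_exp_neg_log_one_add_sqrt_two :
    artanh (exp (-2 * (log (1 + √2) / 2))) = log (1 + √2) / 2 := by
  have h_sq : √2 * √2 = 2 := mul_self_sqrt zero_le_two
  have h_exp : exp (-2 * (log (1 + √2) / 2)) = √2 - 1 := by
    rw [show -2 * (log (1 + √2) / 2) = -log (1 + √2) by ring, exp_neg, exp_log (by positivity)]
    exact inv_eq_of_mul_eq_one_right (by linear_combination h_sq)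
  have h_tanh : tanh (log (1 + √2) / 2) = √2 - 1 := by
    rw [tanh_eq_one_sub_exp_div_one_add_exp, h_exp, div_eq_iff (by simp)]
    linear_combination -h_sq
  rw [h_exp, ← h_tanh, artanh_tanh]

theorem integral_artanh_exp_neg_two_mul :
    ∫ x in Ioi 0, artanh (exp (-2 * x)) = π ^ 2 / 16 := by
  let expTerm (n : ℕ) (x : ℝ) : ℝ := exp (-(2 * (2 * n + 1)) * x) / (2 * n + 1)
  have h_neg (n : ℕ) : -(2 * (2 * (n : ℝ) + 1)) < 0 := neg_lt_zero.mpr (by positivity)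
  have h_integrable (n : ℕ) : IntegrableOn (expTerm n) (Ioi 0) :=
    (integrableOn_exp_mul_Ioi (h_neg n) 0).div_const _
  have h_integral (n : ℕ) : ∫ x in Ioi 0, expTerm n x = 1 / (2 * (n : ℝ) + 1) ^ 2 / 2 := by
    rw [integral_div, integral_exp_mul_Ioi (h_neg n), mul_zero, exp_zero]
    field_simp
  have h_norm (n : ℕ) (x : ℝ) : ‖expTerm n x‖ = expTerm n x := norm_of_nonneg (by positivity)
  have h_series {x : ℝ} (hx : 0 < x) : HasSum (expTerm · x) (artanh (exp (-2 * x))) :=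
    (hasSum_artanh (abs_lt.mpr (exp_neg_two_mul_mem_Ioo hx))).congr_fun fun n => by
      simp only [expTerm, ← exp_nat_mul]
      push_cast
      ring_nf
  have h_sum : HasSum (fun n => ∫ x in Ioi 0, expTerm n x) (π ^ 2 / 8 / 2) := by
    simpa only [h_integral] using hasSum_one_div_odd_sq.div_const 2
  have h_swap := hasSum_integral_of_summable_integral_norm h_integrable
    (by simpa only [h_norm] using h_sum.summable)
  rw [← setIntegral_congr_fun measurableSet_Ioi fun x hx => (h_series hx).tsum_eq,
    h_swap.unique h_sum]
  ring

theorem integrableOn_artanh_exp_neg_two_mul :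
    IntegrableOn (fun x => artanh (exp (-2 * x))) (Ioi 0) :=
  .of_integral_ne_zero (by rw [integral_artanh_exp_neg_two_mul]; positivity)

theorem setIntegral_Ioc_eq_mul_add_integral_Ioi {f g : ℝ → ℝ} {a : ℝ} (ha : 0 < a)
    (hf : IntegrableOn f (Ioc 0 a)) (hg : IntegrableOn g (Ioi (f a)))
    (hf_nonneg : ∀ x, 0 < x → 0 ≤ f x) (hg_nonneg : ∀ y, 0 < y → 0 ≤ g y)
    (hfg : ∀ x y, 0 < x → 0 < y → (y ≤ f x ↔ x ≤ g y)) :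
    ∫ x in Ioc 0 a, f x = a * f a + ∫ y in Ioi (f a), g y := by
  let length (y : ℝ) : ℝ := (volume.restrict (Ioc 0 a)).real {x | y ≤ f x}
  have h_length {y : ℝ} (hy : 0 < y) : length y = min a (g y) := by
    have h_set : {x | y ≤ f x} ∩ Ioc 0 a = Ioc 0 (min a (g y)) := by
      ext x
      have := hfg x y
      grind
    rw [show length y = _ from measureReal_restrict_apply' measurableSet_Ioc, h_set,
      volume_real_Ioc_of_le (le_min ha.le (hg_nonneg y hy)), sub_zero]
  have h_low : EqOn length (fun _ => a) (Ioc 0 (f a)) := fun y hy => by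
    rw [h_length hy.1, min_eq_left ((hfg a y ha hy.1).mp hy.2)]
  have h_high : EqOn length g (Ioi (f a)) := fun y hy => by
    have hy0 : 0 < y := (hf_nonneg a ha).trans_lt hy
    rw [h_length hy0, min_eq_right (not_le.mp ((hfg a y ha hy0).not.mp (not_le.mpr hy))).le]
  calc ∫ x in Ioc 0 a, f x
      = ∫ y in Ioi 0, length y :=
        hf.integral_eq_integral_meas_le
          ((ae_restrict_iff' measurableSet_Ioc).mpr (.of_forall fun x hx => hf_nonneg x hx.1))
    _ = (∫ y in Ioc 0 (f a), length y) + ∫ y in Ioi (f a), length y := by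
        rw [← Ioc_union_Ioi_eq_Ioi (hf_nonneg a ha)]
        exact setIntegral_union Ioc_disjoint_Ioi_same measurableSet_Ioi
          ((integrableOn_congr_fun h_low measurableSet_Ioc).mpr
            (integrableOn_const measure_Ioc_lt_top.ne))
          ((integrableOn_congr_fun h_high measurableSet_Ioi).mpr hg)
    _ = a * f a + ∫ y in Ioi (f a), g y := by
        rw [setIntegral_congr_fun measurableSet_Ioc h_low,
          setIntegral_congr_fun measurableSet_Ioi h_high, setIntegral_const,
          volume_real_Ioc_of_le (hf_nonneg a ha), sub_zero, smul_eq_mul, mul_comm]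

theorem integral_Ioi_artanh_add_integral_Ioi_artanh {a : ℝ} (ha : 0 < a) :
    (∫ x in Ioi a, artanh (exp (-2 * x))) +
        ∫ x in Ioi (artanh (exp (-2 * a))), artanh (exp (-2 * x)) =
      π ^ 2 / 16 - a * artanh (exp (-2 * a)) := by
  have h_nonneg (x : ℝ) : 0 ≤ artanh (exp (-2 * x)) := artanh_nonneg (exp_pos _).le
  have h_int := integrableOn_artanh_exp_neg_two_mul
  have h_int_Ioc := h_int.mono_set (Ioc_subset_Ioi_self : Ioc 0 a ⊆ Ioi 0)
  have h_head := setIntegral_Ioc_eq_mul_add_integral_Ioi ha h_int_Ioc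
    (h_int.mono_set (Ioi_subset_Ioi (h_nonneg a))) (fun x _ => h_nonneg x) (fun x _ => h_nonneg x)
    fun _ _ => le_artanh_exp_neg_two_mul_comm
  have h_split := setIntegral_union Ioc_disjoint_Ioi_same measurableSet_Ioi h_int_Ioc
    (h_int.mono_set (Ioi_subset_Ioi ha.le))
  rw [Ioc_union_Ioi_eq_Ioi ha.le, integral_artanh_exp_neg_two_mul] at h_split
  linarith

/-- With α = ln(1+√2), ∫_{α/2}^∞ ln(tanh z) dz = (1/4)·ln²(1+√2) − π²/16. -/
theorem integral_log_tanh :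
    (∫ z in Set.Ioi (Real.log (1 + Real.sqrt 2) / 2), Real.log (Real.tanh z)) =
      (1 / 4) * Real.log (1 + Real.sqrt 2) ^ 2 - Real.pi ^ 2 / 16 := by
  have h_pos : 0 < log (1 + √2) / 2 := half_pos (log_pos (by simp))
  have h_tails := integral_Ioi_artanh_add_integral_Ioi_artanh h_pos
  rw [artanh_exp_neg_log_one_add_sqrt_two] at h_tails
  rw [setIntegral_congr_fun measurableSet_Ioi fun z hz =>
      log_tanh_eq_neg_two_mul_artanh (h_pos.trans hz), integral_const_mul]
  linarith
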